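/- arXiv:1205.3612 — 10 statements merged into one kernel-verified Lean document; each statement's English description precedes it below -/
import Mathlib

section
/- In typed monoids, if the untyped equality ⊢ a = b is derivable, then for all objects n,m, a : n→m is derivable if and only if b : n→m is derivable. -/
/-- Terms over the signature {·₂, 1₀}: variables, unit, product. -/
inductive MonTerm (X : Type) : Type where
  | var : X → MonTerm X
  | one : MonTerm X
  | mul : MonTerm X → MonTerm X → MonTerm X

/-- Typing judgement for typed monoids, in environment `Γ`. -/
inductive MonTyp {X T : Type} (Γ : X → T × T) : MonTerm X → T → T → Prop where
  | var (x : X) (n m : T) : Γ x = (n, m) → MonTyp Γ (.var x) n m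
  | one (n : T) : MonTyp Γ .one n n
  | mul {a b : MonTerm X} {n m p : T} :
      MonTyp Γ a n m → MonTyp Γ b m p → MonTyp Γ (.mul a b) n p

/-- Typed equality judgement for typed monoids, in environment `Γ`. -/
inductive MonEq {X T : Type} (Γ : X → T × T) : MonTerm X → MonTerm X → T → T → Prop where
  | var (x : X) (n m : T) : Γ x = (n, m) → MonEq Γ (.var x) (.var x) n m
  | symm {a b : MonTerm X} {n m : T} : MonEq Γ a b n m → MonEq Γ b a n m
  | trans {a b c : MonTerm X} {n m : T} :
      MonEq Γ a b n m → MonEq Γ b c n m → MonEq Γ a c n m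
  | one (n : T) : MonEq Γ .one .one n n
  | mul {a a' b b' : MonTerm X} {n m p : T} :
      MonEq Γ a a' n m → MonEq Γ b b' m p → MonEq Γ (.mul a b) (.mul a' b') n p
  | one_mul {a : MonTerm X} {n m : T} : MonTyp Γ a n m → MonEq Γ (.mul .one a) a n m
  | mul_one {a : MonTerm X} {n m : T} : MonTyp Γ a n m → MonEq Γ (.mul a .one) a n m
  | mul_assoc {a b c : MonTerm X} {n m p q : T} :
      MonTyp Γ a n m → MonTyp Γ b m p → MonTyp Γ c p q →
      MonEq Γ (.mul (.mul a b) c) (.mul a (.mul b c)) n q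

/-! Reading a typing judgement as a relation between objects, the unit is typed by equality and a
product by relational composition. Relations on the objects form a monoid under composition, so
every monoid law preserves the typing relation. -/

section

variable {X T : Type} (Γ : X → T × T)

theorem monTyp_one : MonTyp Γ .one = Eq := by
  ext n m
  constructor
  · rintro ⟨⟩
    rfl
  · rintro rfl
    exact .one n

theorem monTyp_mul (a b : MonTerm X) :
    MonTyp Γ (.mul a b) = Relation.Comp (MonTyp Γ a) (MonTyp Γ b) := by
  ext n p
  constructor
  · rintro (_ | _ | ⟨ha, hb⟩)
    exact ⟨_, ha, hb⟩
  · rintro ⟨m, ha, hb⟩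
    exact .mul ha hb

theorem monoid_untyped_eq_preserves_types_general {S : Type} {Δ : X → S × S}
    {a b : MonTerm X} {p q : S} (h : MonEq Δ a b p q) :
    MonTyp Γ a = MonTyp Γ b := by
  induction h with
  | var | one => rfl
  | symm _ ih => exact ih.symm
  | trans _ _ ihab ihbc => exact ihab.trans ihbc
  | mul _ _ iha ihb => rw [monTyp_mul, monTyp_mul, iha, ihb]
  | one_mul => rw [monTyp_mul, monTyp_one, Relation.eq_comp]
  | mul_one => rw [monTyp_mul, monTyp_one, Relation.comp_eq]
  | mul_assoc => simp only [monTyp_mul, Relation.comp_assoc]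

end

/-- In typed monoids, if the untyped equality `⊢ a = b` is derivable (i.e. the typed
equality over the singleton set of objects), then for all objects `n,m`,
`a : n→m` is derivable iff `b : n→m` is derivable. -/
theorem monoid_untyped_eq_preserves_types {X T : Type} (Γ : X → T × T)
    (a b : MonTerm X) :
    MonEq (fun _ : X => ((), ())) a b () () →
    ∀ n m : T, MonTyp Γ a n m ↔ MonTyp Γ b n m := by
  intro h n m
  rw [monoid_untyped_eq_preserves_types_general Γ h]
end

section
/- Untyping theorem for monoids: if the untyped equality ⊢ a = b is derivable and both a : n→m and b : n→m are derivable in environment Γ, then the typed equality a = b : n→m is derivable in Γ. -/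
/-!
Along any derivation of an equality, in whatever environment, every term has the same types in `Γ`,
because each monoid axiom relates terms with the same types. Hence once one end of a transitivity
step is typed at `n → m`, so is the intermediate term, and the derivation can be replayed rule by
rule in `Γ`.
-/

namespace MonTyp

variable {X T : Type} {Γ : X → T × T} {a b : MonTerm X} {n m p : T}

theorem one_iff : MonTyp Γ .one n m ↔ n = m :=
  ⟨fun h => by cases h; rfl, fun h => h ▸ .one n⟩

theorem mul_iff : MonTyp Γ (.mul a b) n p ↔ ∃ m, MonTyp Γ a n m ∧ MonTyp Γ b m p :=
  ⟨fun h => by cases h with | mul ha hb => exact ⟨_, ha, hb⟩, fun ⟨_, ha, hb⟩ => .mul ha hb⟩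

theorem one_mul_iff : MonTyp Γ (.mul .one a) n m ↔ MonTyp Γ a n m := by
  simp only [mul_iff, one_iff, exists_eq_left']

theorem mul_one_iff : MonTyp Γ (.mul a .one) n m ↔ MonTyp Γ a n m := by
  simp only [mul_iff, one_iff, exists_eq_right]

theorem mul_assoc_iff {c : MonTerm X} :
    MonTyp Γ (.mul (.mul a b) c) n m ↔ MonTyp Γ (.mul a (.mul b c)) n m := by
  simp only [mul_iff]
  exact ⟨fun ⟨q, ⟨p, ha, hb⟩, hc⟩ => ⟨p, ha, q, hb, hc⟩,
    fun ⟨p, ha, q, hb, hc⟩ => ⟨q, ⟨p, ha, hb⟩, hc⟩⟩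

end MonTyp

theorem MonEq.typ_iff {X S T : Type} {Δ : X → S × S} {a b : MonTerm X} {s t : S}
    (h : MonEq Δ a b s t) (Γ : X → T × T) (n m : T) : MonTyp Γ a n m ↔ MonTyp Γ b n m := by
  induction h generalizing n m with
  | var => rfl
  | symm _ ih => exact (ih n m).symm
  | trans _ _ ihab ihbc => exact (ihab n m).trans (ihbc n m)
  | one => rfl
  | mul _ _ iha ihb => simp only [MonTyp.mul_iff, iha, ihb]
  | one_mul => exact MonTyp.one_mul_iff
  | mul_one => exact MonTyp.mul_one_iff
  | mul_assoc => exact MonTyp.mul_assoc_iff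

theorem monoid_untyping_general {X S T : Type} {Δ : X → S × S} {Γ : X → T × T}
    {a b : MonTerm X} {s t : S} {n m : T} (h : MonEq Δ a b s t) (ha : MonTyp Γ a n m) :
    MonEq Γ a b n m := by
  induction h generalizing n m with
  | var x =>
    cases ha with
    | var _ _ _ hx => exact .var x n m hx
  | symm hab ih => exact .symm (ih ((hab.typ_iff Γ n m).mpr ha))
  | trans hab _ ihab ihbc => exact .trans (ihab ha) (ihbc ((hab.typ_iff Γ n m).mp ha))
  | one =>
    cases ha
    exact .one n
  | mul _ _ iha ihb =>
    obtain ⟨p, ha, hb⟩ := MonTyp.mul_iff.mp ha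
    exact .mul (iha ha) (ihb hb)
  | one_mul => exact .one_mul (MonTyp.one_mul_iff.mp ha)
  | mul_one => exact .mul_one (MonTyp.mul_one_iff.mp ha)
  | mul_assoc =>
    obtain ⟨q, hab, hc⟩ := MonTyp.mul_iff.mp ha
    obtain ⟨p, ha, hb⟩ := MonTyp.mul_iff.mp hab
    exact .mul_assoc ha hb hc

/-- Untyping theorem for monoids: if the untyped equality `⊢ a = b` is derivable
(i.e. the typed equality over the singleton set of objects) and both `a : n→m` and
`b : n→m` are derivable in environment `Γ`, then the typed equality `a = b : n→m`
is derivable in `Γ`. -/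
theorem monoid_untyping {X T : Type} (Γ : X → T × T)
    (a b : MonTerm X) (n m : T) :
    MonEq (fun _ : X => ((), ())) a b () () →
    MonTyp Γ a n m → MonTyp Γ b n m →
    MonEq Γ a b n m :=
  fun h ha _ => monoid_untyping_general h ha
end

section
/- In typed semirings, normalization preserves types and equality: if a : n→m is derivable, then ⌊a⌋ : n→m and a = ⌊a⌋ : n→m are derivable. -/
/-- Terms over the signature {·₂, +₂, 1₀, 0₀}. -/
inductive SRTerm (X : Type) : Type where
  | var : X → SRTerm X
  | one : SRTerm X
  | zero : SRTerm X
  | mul : SRTerm X → SRTerm X → SRTerm X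
  | add : SRTerm X → SRTerm X → SRTerm X

/-- Typing judgement for typed semirings, in environment `Γ`. -/
inductive SRTyp {X T : Type} (Γ : X → T × T) : SRTerm X → T → T → Prop where
  | var (x : X) (n m : T) : Γ x = (n, m) → SRTyp Γ (.var x) n m
  | one (n : T) : SRTyp Γ .one n n
  | zero (n m : T) : SRTyp Γ .zero n m
  | mul {a b : SRTerm X} {n m p : T} :
      SRTyp Γ a n m → SRTyp Γ b m p → SRTyp Γ (.mul a b) n p
  | add {a b : SRTerm X} {n m : T} :
      SRTyp Γ a n m → SRTyp Γ b n m → SRTyp Γ (.add a b) n m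

/-- `⌊a⌋`: the normal form of `a` for the convergent rewriting system
`a+0 → a`, `0+a → a`, `0·a → 0`, `a·0 → 0`. -/
def SRTerm.norm {X : Type} : SRTerm X → SRTerm X
  | .var x => .var x
  | .one => .one
  | .zero => .zero
  | .mul a b =>
    match a.norm, b.norm with
    | .zero, _ => .zero
    | _, .zero => .zero
    | a', b' => .mul a' b'
  | .add a b =>
    match a.norm, b.norm with
    | .zero, b' => b'
    | a', .zero => a'
    | a', b' => .add a' b'

/-- Typed equality judgement for typed semirings, in environment `Γ`. -/
inductive SREq {X T : Type} (Γ : X → T × T) : SRTerm X → SRTerm X → T → T → Prop where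
  | var (x : X) (n m : T) : Γ x = (n, m) → SREq Γ (.var x) (.var x) n m
  | symm {a b : SRTerm X} {n m : T} : SREq Γ a b n m → SREq Γ b a n m
  | trans {a b c : SRTerm X} {n m : T} :
      SREq Γ a b n m → SREq Γ b c n m → SREq Γ a c n m
  | one (n : T) : SREq Γ .one .one n n
  | zero (n m : T) : SREq Γ .zero .zero n m
  | mul {a a' b b' : SRTerm X} {n m p : T} :
      SREq Γ a a' n m → SREq Γ b b' m p → SREq Γ (.mul a b) (.mul a' b') n p
  | add {a a' b b' : SRTerm X} {n m : T} :
      SREq Γ a a' n m → SREq Γ b b' n m → SREq Γ (.add a b) (.add a' b') n m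
  | one_mul {a : SRTerm X} {n m : T} : SRTyp Γ a n m → SREq Γ (.mul .one a) a n m
  | mul_one {a : SRTerm X} {n m : T} : SRTyp Γ a n m → SREq Γ (.mul a .one) a n m
  | mul_assoc {a b c : SRTerm X} {n m p q : T} :
      SRTyp Γ a n m → SRTyp Γ b m p → SRTyp Γ c p q →
      SREq Γ (.mul (.mul a b) c) (.mul a (.mul b c)) n q
  | add_zero {a : SRTerm X} {n m : T} : SRTyp Γ a n m → SREq Γ (.add a .zero) a n m
  | add_comm {a b : SRTerm X} {n m : T} :
      SRTyp Γ a n m → SRTyp Γ b n m → SREq Γ (.add a b) (.add b a) n m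
  | add_assoc {a b c : SRTerm X} {n m : T} :
      SRTyp Γ a n m → SRTyp Γ b n m → SRTyp Γ c n m →
      SREq Γ (.add (.add a b) c) (.add a (.add b c)) n m
  | mul_add {a b c : SRTerm X} {n m p : T} :
      SRTyp Γ a n m → SRTyp Γ b m p → SRTyp Γ c m p →
      SREq Γ (.mul a (.add b c)) (.add (.mul a b) (.mul a c)) n p
  | add_mul {a b c : SRTerm X} {n m p : T} :
      SRTyp Γ a n m → SRTyp Γ b p n → SRTyp Γ c p n →
      SREq Γ (.mul (.add b c) a) (.add (.mul b a) (.mul c a)) p m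
  | mul_zero {a : SRTerm X} {n m p : T} : SRTyp Γ a n m → SREq Γ (.mul a .zero) .zero n p
  | zero_mul {a : SRTerm X} {n m p : T} : SRTyp Γ a n m → SREq Γ (.mul .zero a) .zero p m

/-! The argument is subject reduction. Inverting the typing of a redex types its immediate subterms,
so that contracting it preserves the type and is an instance of a semiring axiom at that type. This
extends along reduction sequences, and `⌊a⌋` is a reduct of `a` even when `a` is not typable. -/

namespace SRTerm

variable {X : Type} {a a' b b' : SRTerm X}

/-- One step of the rewriting system `a+0 → a`, `0+a → a`, `0·a → 0`, `a·0 → 0` on untyped terms,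
closed under contexts: the unit of the subject reduction argument. -/
inductive Step : SRTerm X → SRTerm X → Prop where
  | add_zero (a : SRTerm X) : Step (.add a .zero) a
  | zero_add (a : SRTerm X) : Step (.add .zero a) a
  | zero_mul (a : SRTerm X) : Step (.mul .zero a) .zero
  | mul_zero (a : SRTerm X) : Step (.mul a .zero) .zero
  | mul_left {a a' : SRTerm X} (b : SRTerm X) : Step a a' → Step (.mul a b) (.mul a' b)
  | mul_right (a : SRTerm X) {b b' : SRTerm X} : Step b b' → Step (.mul a b) (.mul a b')
  | add_left {a a' : SRTerm X} (b : SRTerm X) : Step a a' → Step (.add a b) (.add a' b)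
  | add_right (a : SRTerm X) {b b' : SRTerm X} : Step b b' → Step (.add a b) (.add a b')

/-- `a` rewrites to `b` in finitely many, possibly zero, steps; relates `a` to `⌊a⌋`. -/
def Reduces (a b : SRTerm X) : Prop := Relation.ReflTransGen Step a b

namespace Reduces

theorem mul (ha : Reduces a a') (hb : Reduces b b') : Reduces (.mul a b) (.mul a' b') :=
  (Relation.ReflTransGen.lift (SRTerm.mul · b) (fun _ _ ↦ Step.mul_left b) _ _ ha).trans
    (Relation.ReflTransGen.lift (SRTerm.mul a' ·) (fun _ _ ↦ Step.mul_right a') _ _ hb)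

theorem add (ha : Reduces a a') (hb : Reduces b b') : Reduces (.add a b) (.add a' b') :=
  (Relation.ReflTransGen.lift (SRTerm.add · b) (fun _ _ ↦ Step.add_left b) _ _ ha).trans
    (Relation.ReflTransGen.lift (SRTerm.add a' ·) (fun _ _ ↦ Step.add_right a') _ _ hb)

end Reduces

theorem reduces_norm (a : SRTerm X) : Reduces a a.norm := by
  induction a with
  | var x => exact .refl
  | one => exact .refl
  | zero => exact .refl
  | mul a b iha ihb =>
    have hab : Reduces (.mul a b) (.mul a.norm b.norm) := iha.mul ihb
    simp only [norm]
    split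
    next ha => exact hab.tail (ha ▸ .zero_mul b.norm)
    next hb _ => exact hab.tail (hb ▸ .mul_zero a.norm)
    next => exact hab
  | add a b iha ihb =>
    have hab : Reduces (.add a b) (.add a.norm b.norm) := iha.add ihb
    simp only [norm]
    split
    next ha => exact hab.tail (ha ▸ .zero_add b.norm)
    next hb _ => exact hab.tail (hb ▸ .add_zero a.norm)
    next => exact hab

end SRTerm

section SubjectReduction

variable {X T : Type} {Γ : X → T × T}

theorem SRTyp.of_step {a b : SRTerm X} {n m : T} :
    a.Step b → SRTyp Γ a n m → SRTyp Γ b n m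
  | .add_zero _, .add ha _ => ha
  | .zero_add _, .add _ ha => ha
  | .zero_mul _, .mul _ _ => .zero _ _
  | .mul_zero _, .mul _ _ => .zero _ _
  | .mul_left _ h, .mul ha hb => .mul (ha.of_step h) hb
  | .mul_right _ h, .mul ha hb => .mul ha (hb.of_step h)
  | .add_left _ h, .add ha hb => .add (ha.of_step h) hb
  | .add_right _ h, .add ha hb => .add ha (hb.of_step h)

theorem SRTyp.of_reduces {a b : SRTerm X} {n m : T} (hab : a.Reduces b) (ha : SRTyp Γ a n m) :
    SRTyp Γ b n m := by
  induction hab with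
  | refl => exact ha
  | tail _ hstep ih => exact ih.of_step hstep

theorem SREq.refl {a : SRTerm X} {n m : T} : SRTyp Γ a n m → SREq Γ a a n m
  | .var x n m hx => .var x n m hx
  | .one n => .one n
  | .zero n m => .zero n m
  | .mul ha hb => .mul (refl ha) (refl hb)
  | .add ha hb => .add (refl ha) (refl hb)

theorem SREq.zero_add {a : SRTerm X} {n m : T} (ha : SRTyp Γ a n m) :
    SREq Γ (.add .zero a) a n m :=
  (SREq.add_comm (.zero n m) ha).trans (.add_zero ha)

theorem SREq.of_step {a b : SRTerm X} {n m : T} :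
    a.Step b → SRTyp Γ a n m → SREq Γ a b n m
  | .add_zero _, .add ha _ => .add_zero ha
  | .zero_add _, .add _ ha => .zero_add ha
  | .zero_mul _, .mul _ ha => .zero_mul ha
  | .mul_zero _, .mul ha _ => .mul_zero ha
  | .mul_left _ h, .mul ha hb => .mul (of_step h ha) (.refl hb)
  | .mul_right _ h, .mul ha hb => .mul (.refl ha) (of_step h hb)
  | .add_left _ h, .add ha hb => .add (of_step h ha) (.refl hb)
  | .add_right _ h, .add ha hb => .add (.refl ha) (of_step h hb)

theorem SREq.of_reduces {a b : SRTerm X} {n m : T} (hab : a.Reduces b) (ha : SRTyp Γ a n m) :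
    SREq Γ a b n m := by
  induction hab with
  | refl => exact .refl ha
  | tail hac hstep ih => exact ih.trans (.of_step hstep (ha.of_reduces hac))

end SubjectReduction

/-- In typed semirings, normalization preserves types and equality:
if `a : n→m` is derivable, then `⌊a⌋ : n→m` and `a = ⌊a⌋ : n→m` are derivable. -/
theorem semiring_norm_preserves {X T : Type} (Γ : X → T × T)
    (a : SRTerm X) (n m : T) :
    SRTyp Γ a n m → SRTyp Γ a.norm n m ∧ SREq Γ a a.norm n m :=
  fun ha ↦ ⟨ha.of_reduces a.reduces_norm, .of_reduces a.reduces_norm ha⟩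
end

section
/- In typed semirings, for all strict terms a (i.e. terms with ⌊a⌋ ≠ 0) such that a : n→m and a : n'→m' are derivable, one has n = n' if and only if m = m'. -/
/-!
The types of a term form a binary relation on objects: composition for `·`, intersection for `+`,
equality for `1`, a single pair for a variable. The claim says that this relation is one-to-one.
Being one-to-one is preserved by composition and inherited by subrelations, but the relation of `0`
is total. Strictness neutralizes `0`: both factors of a strict product are strict, and one strict
summand already makes the intersection one-to-one.
-/

section BiUnique

variable {α β γ : Type*}

theorem biUnique_comp {r : α → β → Prop} {s : β → γ → Prop}
    (hr : Relator.BiUnique r) (hs : Relator.BiUnique s) : Relator.BiUnique (Relation.Comp r s) := by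
  constructor
  · rintro a a' c ⟨b, hab, hbc⟩ ⟨b', hab', hbc'⟩
    obtain rfl : b = b' := hs.left hbc hbc'
    exact hr.left hab hab'
  · rintro a c c' ⟨b, hab, hbc⟩ ⟨b', hab', hbc'⟩
    obtain rfl : b = b' := hr.right hab hab'
    exact hs.right hbc hbc'

theorem biUnique_mono {r s : α → β → Prop} (hrs : r ≤ s) (hs : Relator.BiUnique s) :
    Relator.BiUnique r :=
  ⟨fun _ _ _ h h' => hs.left (hrs _ _ h) (hrs _ _ h'),
    fun _ _ _ h h' => hs.right (hrs _ _ h) (hrs _ _ h')⟩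

end BiUnique

namespace SRTerm

variable {X : Type} {a b : SRTerm X}

/-- Strict terms: those whose normal form is not `0`. -/
def Strict (a : SRTerm X) : Prop :=
  a.norm ≠ .zero

theorem not_strict_zero : ¬ (zero : SRTerm X).Strict :=
  fun h => h rfl

theorem Strict.of_mul (h : (mul a b).Strict) : a.Strict ∧ b.Strict := by
  constructor
  · intro ha
    exact h (by simp only [norm, ha])
  · intro hb
    refine h ?_
    simp only [norm, hb]
    cases a.norm <;> rfl

theorem Strict.of_add (h : (add a b).Strict) : a.Strict ∨ b.Strict := by
  by_contra! hab
  obtain ⟨ha, hb⟩ : a.norm = .zero ∧ b.norm = .zero := by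
    simpa only [Strict, not_not] using hab
  exact h (by simp only [norm, ha, hb])

end SRTerm

namespace SRTyp

variable {X T : Type} {Γ : X → T × T} {a b : SRTerm X}

theorem var_iff {x : X} {n m : T} : SRTyp Γ (.var x) n m ↔ Γ x = (n, m) :=
  ⟨fun | .var _ _ _ h => h, .var x n m⟩

theorem one_eq : SRTyp Γ .one = Eq := by
  ext n m
  exact ⟨fun | .one _ => rfl, fun h => h ▸ .one n⟩

theorem mul_eq_comp : SRTyp Γ (.mul a b) = Relation.Comp (SRTyp Γ a) (SRTyp Γ b) := by
  ext n p
  exact ⟨fun | .mul ha hb => ⟨_, ha, hb⟩, fun ⟨_, ha, hb⟩ => .mul ha hb⟩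

theorem add_eq_inf : SRTyp Γ (.add a b) = SRTyp Γ a ⊓ SRTyp Γ b := by
  ext n m
  exact ⟨fun | .add ha hb => ⟨ha, hb⟩, fun ⟨ha, hb⟩ => .add ha hb⟩

theorem biUnique_var (x : X) : Relator.BiUnique (SRTyp Γ (.var x)) := by
  constructor
  · intro n n' m h h'
    exact congrArg Prod.fst ((var_iff.mp h).symm.trans (var_iff.mp h'))
  · intro n m m' h h'
    exact congrArg Prod.snd ((var_iff.mp h).symm.trans (var_iff.mp h'))

theorem biUnique_one : Relator.BiUnique (SRTyp Γ .one) := by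
  rw [one_eq]
  exact ⟨fun _ _ _ h h' => h.trans h'.symm, fun _ _ _ h h' => h.symm.trans h'⟩

theorem biUnique_of_strict (ha : a.Strict) : Relator.BiUnique (SRTyp Γ a) := by
  induction a with
  | var x => exact biUnique_var x
  | one => exact biUnique_one
  | zero => exact absurd ha SRTerm.not_strict_zero
  | mul a b iha ihb =>
    rw [mul_eq_comp]
    exact biUnique_comp (iha ha.of_mul.1) (ihb ha.of_mul.2)
  | add a b iha ihb =>
    rw [add_eq_inf]
    rcases ha.of_add with ha | hb
    · exact biUnique_mono inf_le_left (iha ha)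
    · exact biUnique_mono inf_le_right (ihb hb)

end SRTyp

/-- In typed semirings, for all strict terms `a` (i.e. `⌊a⌋ ≠ 0`) such that `a : n→m`
and `a : n'→m'` are derivable, one has `n = n'` iff `m = m'`. -/
theorem semiring_strict_type_injective {X T : Type} (Γ : X → T × T)
    (a : SRTerm X) (n m n' m' : T) :
    a.norm ≠ .zero → SRTyp Γ a n m → SRTyp Γ a n' m' → (n = n' ↔ m = m') :=
  fun ha h h' => Relator.rel_eq (SRTyp.biUnique_of_strict ha) h h'
end

section
/- Untyping theorem for strict semiring equality: if the untyped strict equality ⊢ a =⁺ b is derivable and both a : n→m and b : n→m are derivable in environment Γ, then the typed strict equality a =⁺ b : n→m is derivable in Γ. -/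
/-- Strict typed equality judgement `a =⁺ b : n→m` for typed semirings: the semiring
equality judgement without the annihilation rules, and with the two distributivity
rules restricted to strict factors. -/
inductive SREqS {X T : Type} (Γ : X → T × T) : SRTerm X → SRTerm X → T → T → Prop where
  | var (x : X) (n m : T) : Γ x = (n, m) → SREqS Γ (.var x) (.var x) n m
  | symm {a b : SRTerm X} {n m : T} : SREqS Γ a b n m → SREqS Γ b a n m
  | trans {a b c : SRTerm X} {n m : T} :
      SREqS Γ a b n m → SREqS Γ b c n m → SREqS Γ a c n m
  | one (n : T) : SREqS Γ .one .one n n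
  | zero (n m : T) : SREqS Γ .zero .zero n m
  | mul {a a' b b' : SRTerm X} {n m p : T} :
      SREqS Γ a a' n m → SREqS Γ b b' m p → SREqS Γ (.mul a b) (.mul a' b') n p
  | add {a a' b b' : SRTerm X} {n m : T} :
      SREqS Γ a a' n m → SREqS Γ b b' n m → SREqS Γ (.add a b) (.add a' b') n m
  | one_mul {a : SRTerm X} {n m : T} : SRTyp Γ a n m → SREqS Γ (.mul .one a) a n m
  | mul_one {a : SRTerm X} {n m : T} : SRTyp Γ a n m → SREqS Γ (.mul a .one) a n m
  | mul_assoc {a b c : SRTerm X} {n m p q : T} :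
      SRTyp Γ a n m → SRTyp Γ b m p → SRTyp Γ c p q →
      SREqS Γ (.mul (.mul a b) c) (.mul a (.mul b c)) n q
  | add_zero {a : SRTerm X} {n m : T} : SRTyp Γ a n m → SREqS Γ (.add a .zero) a n m
  | add_comm {a b : SRTerm X} {n m : T} :
      SRTyp Γ a n m → SRTyp Γ b n m → SREqS Γ (.add a b) (.add b a) n m
  | add_assoc {a b c : SRTerm X} {n m : T} :
      SRTyp Γ a n m → SRTyp Γ b n m → SRTyp Γ c n m →
      SREqS Γ (.add (.add a b) c) (.add a (.add b c)) n m
  | mul_add {a b c : SRTerm X} {n m p : T} :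
      SRTyp Γ a n m → SRTyp Γ b m p → SRTyp Γ c m p → a.norm ≠ .zero →
      SREqS Γ (.mul a (.add b c)) (.add (.mul a b) (.mul a c)) n p
  | add_mul {a b c : SRTerm X} {n m p : T} :
      SRTyp Γ a n m → SRTyp Γ b p n → SRTyp Γ c p n → a.norm ≠ .zero →
      SREqS Γ (.mul (.add b c) a) (.add (.mul b a) (.mul c a)) p m

/-!
The zero-free part of a term determines its type on either side from the other: if `a` is strict
and `a : n→m`, `a : n'→m'`, then `n = n'` iff `m = m'`. Only the distributivity rules, read from
right to left, merge two independently typed occurrences of a term, and there strictness makes the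
two types agree. Hence every derivable equation preserves typing in both directions, in any
environment, and any derivation can be replayed at the type of its left-hand side.
-/

section Strictness

variable {X : Type}

/-- A term is strict if its normal form `⌊a⌋` is not `0`. -/
def SRTerm.IsStrict (a : SRTerm X) : Prop := a.norm ≠ .zero

theorem SRTerm.isStrict_mul {a b : SRTerm X} :
    (SRTerm.mul a b).IsStrict ↔ a.IsStrict ∧ b.IsStrict := by
  simp only [IsStrict, norm]
  split <;> simp_all

theorem SRTerm.isStrict_add {a b : SRTerm X} :
    (SRTerm.add a b).IsStrict ↔ a.IsStrict ∨ b.IsStrict := by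
  simp only [IsStrict, norm]
  split <;> simp_all

end Strictness

section Typing

variable {X T : Type} {Γ : X → T × T} {a b c : SRTerm X} {n m n' m' : T}

theorem SRTyp.one_iff : SRTyp Γ .one n m ↔ n = m :=
  ⟨fun | .one _ => rfl, fun h => h ▸ .one n⟩

theorem SRTyp.mul_iff :
    SRTyp Γ (.mul a b) n m ↔ ∃ p, SRTyp Γ a n p ∧ SRTyp Γ b p m :=
  ⟨fun | .mul ha hb => ⟨_, ha, hb⟩, fun ⟨_, ha, hb⟩ => .mul ha hb⟩

theorem SRTyp.add_iff : SRTyp Γ (.add a b) n m ↔ SRTyp Γ a n m ∧ SRTyp Γ b n m :=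
  ⟨fun | .add ha hb => ⟨ha, hb⟩, fun ⟨ha, hb⟩ => .add ha hb⟩

theorem SRTyp.source_eq_iff_target_eq (h : SRTyp Γ a n m) (h' : SRTyp Γ a n' m')
    (hs : a.IsStrict) : n = n' ↔ m = m' := by
  induction h generalizing n' m' with
  | var x n m hx =>
    obtain ⟨_, _, _, hx'⟩ := h'
    obtain ⟨rfl, rfl⟩ := Prod.mk.inj (hx.symm.trans hx')
    exact iff_of_true rfl rfl
  | one n =>
    obtain rfl := one_iff.mp h'
    rfl
  | zero n m => exact absurd rfl hs
  | mul _ _ iha ihb =>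
    obtain ⟨hsa, hsb⟩ := SRTerm.isStrict_mul.mp hs
    obtain ⟨_, ha', hb'⟩ := mul_iff.mp h'
    exact (iha ha' hsa).trans (ihb hb' hsb)
  | add _ _ iha ihb =>
    obtain ⟨ha', hb'⟩ := add_iff.mp h'
    exact (SRTerm.isStrict_add.mp hs).elim (iha ha') (ihb hb')

theorem SRTyp.mul_add_iff (hs : a.IsStrict) :
    SRTyp Γ (.mul a (.add b c)) n m ↔ SRTyp Γ (.add (.mul a b) (.mul a c)) n m := by
  simp only [mul_iff, add_iff]
  constructor
  · rintro ⟨p, ha, hb, hc⟩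
    exact ⟨⟨p, ha, hb⟩, ⟨p, ha, hc⟩⟩
  · rintro ⟨⟨p, ha, hb⟩, ⟨p', ha', hc⟩⟩
    obtain rfl : p = p' := (ha.source_eq_iff_target_eq ha' hs).mp rfl
    exact ⟨p, ha, hb, hc⟩

theorem SRTyp.add_mul_iff (hs : a.IsStrict) :
    SRTyp Γ (.mul (.add b c) a) n m ↔ SRTyp Γ (.add (.mul b a) (.mul c a)) n m := by
  simp only [mul_iff, add_iff]
  constructor
  · rintro ⟨p, ⟨hb, hc⟩, ha⟩
    exact ⟨⟨p, hb, ha⟩, ⟨p, hc, ha⟩⟩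
  · rintro ⟨⟨p, hb, ha⟩, ⟨p', hc, ha'⟩⟩
    obtain rfl : p = p' := (ha.source_eq_iff_target_eq ha' hs).mpr rfl
    exact ⟨p, ⟨hb, hc⟩, ha⟩

end Typing

section Untyping

variable {X T U : Type} {Δ : X → U × U} {a b : SRTerm X} {u v : U} {Γ : X → T × T} {n m : T}

theorem SREqS.typ_iff (h : SREqS Δ a b u v) : SRTyp Γ a n m ↔ SRTyp Γ b n m := by
  induction h generalizing n m with
  | var | one | zero => rfl
  | symm _ ih => exact ih.symm
  | trans _ _ ihab ihbc => exact ihab.trans ihbc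
  | mul _ _ iha ihb => simp only [SRTyp.mul_iff, iha, ihb]
  | add _ _ iha ihb => simp only [SRTyp.add_iff, iha, ihb]
  | one_mul => simp only [SRTyp.mul_iff, SRTyp.one_iff, exists_eq_left']
  | mul_one => simp only [SRTyp.mul_iff, SRTyp.one_iff, exists_eq_right]
  | mul_assoc =>
    exact ⟨fun | .mul (.mul ha hb) hc => .mul ha (.mul hb hc),
      fun | .mul ha (.mul hb hc) => .mul (.mul ha hb) hc⟩
  | add_zero => simp only [SRTyp.add_iff, SRTyp.zero, and_true]
  | add_comm => simp only [SRTyp.add_iff, and_comm]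
  | add_assoc => simp only [SRTyp.add_iff, and_assoc]
  | mul_add _ _ _ hs => exact SRTyp.mul_add_iff hs
  | add_mul _ _ _ hs => exact SRTyp.add_mul_iff hs

theorem semiring_strict_untyping_general (h : SREqS Δ a b u v) (ht : SRTyp Γ a n m) :
    SREqS Γ a b n m := by
  induction h generalizing n m with
  | symm h ih => exact .symm (ih (h.typ_iff.mpr ht))
  | trans h _ ihab ihbc => exact .trans (ihab ht) (ihbc (h.typ_iff.mp ht))
  | var => exact match ht with | .var _ _ _ hx => .var _ _ _ hx
  | one => exact match ht with | .one _ => .one _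
  | zero => exact .zero _ _
  | mul _ _ iha ihb => exact match ht with | .mul ha hb => .mul (iha ha) (ihb hb)
  | add _ _ iha ihb => exact match ht with | .add ha hb => .add (iha ha) (ihb hb)
  | one_mul => exact match ht with | .mul (.one _) ha => .one_mul ha
  | mul_one => exact match ht with | .mul ha (.one _) => .mul_one ha
  | mul_assoc => exact match ht with | .mul (.mul ha hb) hc => .mul_assoc ha hb hc
  | add_zero => exact match ht with | .add ha _ => .add_zero ha
  | add_comm => exact match ht with | .add ha hb => .add_comm ha hb
  | add_assoc => exact match ht with | .add (.add ha hb) hc => .add_assoc ha hb hc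
  | mul_add _ _ _ hs => exact match ht with | .mul ha (.add hb hc) => .mul_add ha hb hc hs
  | add_mul _ _ _ hs => exact match ht with | .mul (.add hb hc) ha => .add_mul ha hb hc hs

end Untyping

/-- Untyping theorem for strict semiring equality: if the untyped strict equality
`⊢ a =⁺ b` is derivable (i.e. the strict equality over the singleton set of objects)
and both `a : n→m` and `b : n→m` are derivable in environment `Γ`, then the typed
strict equality `a =⁺ b : n→m` is derivable in `Γ`. -/
theorem semiring_strict_untyping {X T : Type} (Γ : X → T × T)
    (a b : SRTerm X) (n m : T) :
    SREqS (fun _ : X => ((), ())) a b () () →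
    SRTyp Γ a n m → SRTyp Γ b n m →
    SREqS Γ a b n m :=
  fun h ha _ => semiring_strict_untyping_general h ha
end

section
/- Factorisation for semirings: if the untyped semiring equality ⊢ a = b is derivable, then the untyped strict equality ⊢ ⌊a⌋ =⁺ ⌊b⌋ of the normal forms is derivable. -/
/-!
Normalisation is a homomorphism from terms to terms equipped with a sum that absorbs `0` and a
product that is annihilated by `0`. Up to `=⁺`, these operations satisfy the semiring laws on
normal forms: the absorbing sum is strictly equal to the formal one since `a + 0 = a` is strict,
and the annihilating product is the formal one unless a factor is `0`, in which case each
multiplicative law degenerates to a reflexive instance. Compatibility of the annihilating product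
with `=⁺` requires that equal terms have vanishing normal forms simultaneously; this holds because
`a ↦ (⌊a⌋ ≠ 0)` is an interpretation of terms in the two-element semiring `({⊥, ⊤}, ∨, ∧)`.
-/

namespace SRTerm

variable {X : Type} {a b : SRTerm X}

/-- Annihilating product: the operation on normal forms induced by multiplication, in which a
factor that is literally `0` gives `0`. -/
def nmul : SRTerm X → SRTerm X → SRTerm X
  | .zero, _ => .zero
  | _, .zero => .zero
  | a, b => .mul a b

/-- Absorbing sum: the operation on normal forms induced by addition, in which a summand that is
literally `0` is dropped. -/
def nadd : SRTerm X → SRTerm X → SRTerm X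
  | .zero, b => b
  | a, .zero => a
  | a, b => .add a b

@[simp]
theorem zero_nmul (a : SRTerm X) : nmul .zero a = .zero := rfl

@[simp]
theorem nmul_zero (a : SRTerm X) : a.nmul .zero = .zero := by cases a <;> rfl

@[simp]
theorem zero_nadd (a : SRTerm X) : nadd .zero a = a := rfl

@[simp]
theorem nadd_zero (a : SRTerm X) : a.nadd .zero = a := by cases a <;> rfl

theorem nmul_of_ne_zero (ha : a ≠ .zero) (hb : b ≠ .zero) : a.nmul b = .mul a b := by
  rw [nmul] <;> assumption

theorem nadd_of_ne_zero (ha : a ≠ .zero) (hb : b ≠ .zero) : a.nadd b = .add a b := by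
  rw [nadd] <;> assumption

@[simp]
theorem nmul_eq_zero : a.nmul b = .zero ↔ a = .zero ∨ b = .zero := by
  rcases eq_or_ne a .zero with rfl | ha
  · simp
  rcases eq_or_ne b .zero with rfl | hb
  · simp
  simp [nmul_of_ne_zero, ha, hb]

@[simp]
theorem nadd_eq_zero : a.nadd b = .zero ↔ a = .zero ∧ b = .zero := by
  rcases eq_or_ne a .zero with rfl | ha
  · simp
  rcases eq_or_ne b .zero with rfl | hb
  · simp
  simp [nadd_of_ne_zero, ha, hb]

@[simp]
theorem norm_one : (one : SRTerm X).norm = .one := rfl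

@[simp]
theorem norm_zero : (zero : SRTerm X).norm = .zero := rfl

@[simp]
theorem norm_mul (a b : SRTerm X) : (mul a b).norm = a.norm.nmul b.norm := rfl

@[simp]
theorem norm_add (a b : SRTerm X) : (add a b).norm = a.norm.nadd b.norm := rfl

theorem norm_nmul (a b : SRTerm X) : (a.nmul b).norm = a.norm.nmul b.norm := by
  rcases eq_or_ne a .zero with rfl | ha
  · simp
  rcases eq_or_ne b .zero with rfl | hb
  · simp
  rw [nmul_of_ne_zero ha hb, norm_mul]

theorem norm_nadd (a b : SRTerm X) : (a.nadd b).norm = a.norm.nadd b.norm := by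
  rcases eq_or_ne a .zero with rfl | ha
  · simp
  rcases eq_or_ne b .zero with rfl | hb
  · simp
  rw [nadd_of_ne_zero ha hb, norm_add]

theorem norm_norm (a : SRTerm X) : a.norm.norm = a.norm := by
  induction a with
  | var x => rfl
  | one => rfl
  | zero => rfl
  | mul a b iha ihb => rw [norm_mul, norm_nmul, iha, ihb]
  | add a b iha ihb => rw [norm_add, norm_nadd, iha, ihb]

end SRTerm

section Judgements

open SRTerm

variable {X T : Type} {Γ : X → T × T} {a a' b b' c : SRTerm X} {n m p q : T}

namespace SRTyp

theorem nmul (ha : SRTyp Γ a n m) (hb : SRTyp Γ b m p) : SRTyp Γ (a.nmul b) n p := by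
  rcases eq_or_ne a .zero with rfl | ha0
  · exact .zero n p
  rcases eq_or_ne b .zero with rfl | hb0
  · simpa only [nmul_zero] using SRTyp.zero n p
  rw [nmul_of_ne_zero ha0 hb0]
  exact ha.mul hb

theorem nadd (ha : SRTyp Γ a n m) (hb : SRTyp Γ b n m) : SRTyp Γ (a.nadd b) n m := by
  rcases eq_or_ne a .zero with rfl | ha0
  · exact hb
  rcases eq_or_ne b .zero with rfl | hb0
  · rwa [nadd_zero]
  rw [nadd_of_ne_zero ha0 hb0]
  exact ha.add hb

theorem norm (h : SRTyp Γ a n m) : SRTyp Γ a.norm n m := by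
  induction h with
  | var x n m hx => exact .var x n m hx
  | one n => exact .one n
  | zero n m => exact .zero n m
  | mul _ _ iha ihb => exact iha.nmul ihb
  | add _ _ iha ihb => exact iha.nadd ihb

end SRTyp

namespace SREq

theorem typ (h : SREq Γ a b n m) : SRTyp Γ a n m ∧ SRTyp Γ b n m := by
  induction h with
  | var x n m hx => exact ⟨.var x n m hx, .var x n m hx⟩
  | symm _ ih => exact ih.symm
  | trans _ _ ih₁ ih₂ => exact ⟨ih₁.1, ih₂.2⟩
  | one n => exact ⟨.one n, .one n⟩
  | zero n m => exact ⟨.zero n m, .zero n m⟩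
  | mul _ _ iha ihb => exact ⟨iha.1.mul ihb.1, iha.2.mul ihb.2⟩
  | add _ _ iha ihb => exact ⟨iha.1.add ihb.1, iha.2.add ihb.2⟩
  | one_mul ha => exact ⟨.mul (.one _) ha, ha⟩
  | mul_one ha => exact ⟨ha.mul (.one _), ha⟩
  | mul_assoc ha hb hc => exact ⟨(ha.mul hb).mul hc, ha.mul (hb.mul hc)⟩
  | add_zero ha => exact ⟨ha.add (.zero _ _), ha⟩
  | add_comm ha hb => exact ⟨ha.add hb, hb.add ha⟩
  | add_assoc ha hb hc => exact ⟨(ha.add hb).add hc, ha.add (hb.add hc)⟩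
  | mul_add ha hb hc => exact ⟨ha.mul (hb.add hc), (ha.mul hb).add (ha.mul hc)⟩
  | add_mul ha hb hc => exact ⟨(hb.add hc).mul ha, (hb.mul ha).add (hc.mul ha)⟩
  | mul_zero ha => exact ⟨ha.mul (.zero _ _), .zero _ _⟩
  | zero_mul ha => exact ⟨.mul (.zero _ _) ha, .zero _ _⟩

theorem norm_eq_zero_iff (h : SREq Γ a b n m) : a.norm = .zero ↔ b.norm = .zero := by
  induction h with
  | symm _ ih => exact ih.symm
  | trans _ _ ih₁ ih₂ => exact ih₁.trans ih₂
  | mul _ _ iha ihb => simp only [norm_mul, nmul_eq_zero, iha, ihb]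
  | add _ _ iha ihb => simp only [norm_add, nadd_eq_zero, iha, ihb]
  | var | one | zero => rfl
  | _ =>
    simp only [norm_mul, norm_add, norm_one, norm_zero, nmul_eq_zero, nadd_eq_zero, reduceCtorEq]
    tauto

end SREq

namespace SREqS

theorem refl (h : SRTyp Γ a n m) : SREqS Γ a a n m :=
  (SREqS.add_zero h).symm.trans (.add_zero h)

theorem zero_add (h : SRTyp Γ a n m) : SREqS Γ (.add .zero a) a n m :=
  (SREqS.add_comm (.zero n m) h).trans (.add_zero h)

theorem nadd_add (ha : SRTyp Γ a n m) (hb : SRTyp Γ b n m) :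
    SREqS Γ (a.nadd b) (.add a b) n m := by
  rcases eq_or_ne a .zero with rfl | ha0
  · exact (zero_add hb).symm
  rcases eq_or_ne b .zero with rfl | hb0
  · rw [nadd_zero]
    exact (SREqS.add_zero ha).symm
  rw [nadd_of_ne_zero ha0 hb0]
  exact .refl (ha.add hb)

theorem nadd_congr (haa' : SREqS Γ a a' n m) (hbb' : SREqS Γ b b' n m)
    (ha : SRTyp Γ a n m) (ha' : SRTyp Γ a' n m) (hb : SRTyp Γ b n m) (hb' : SRTyp Γ b' n m) :
    SREqS Γ (a.nadd b) (a'.nadd b') n m :=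
  (nadd_add ha hb).trans <| (haa'.add hbb').trans (nadd_add ha' hb').symm

theorem nadd_comm (ha : SRTyp Γ a n m) (hb : SRTyp Γ b n m) :
    SREqS Γ (a.nadd b) (b.nadd a) n m :=
  (nadd_add ha hb).trans <| (SREqS.add_comm ha hb).trans (nadd_add hb ha).symm

theorem nadd_assoc (ha : SRTyp Γ a n m) (hb : SRTyp Γ b n m) (hc : SRTyp Γ c n m) :
    SREqS Γ ((a.nadd b).nadd c) (a.nadd (b.nadd c)) n m :=
  have left : SREqS Γ ((a.nadd b).nadd c) (.add (.add a b) c) n m :=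
    (nadd_add (ha.nadd hb) hc).trans ((nadd_add ha hb).add (.refl hc))
  have right : SREqS Γ (a.nadd (b.nadd c)) (.add a (.add b c)) n m :=
    (nadd_add ha (hb.nadd hc)).trans ((SREqS.refl ha).add (nadd_add hb hc))
  left.trans <| (SREqS.add_assoc ha hb hc).trans right.symm

theorem nmul_congr (ha : SREqS Γ a a' n m) (hb : SREqS Γ b b' m p)
    (ha_zero : a = .zero ↔ a' = .zero) (hb_zero : b = .zero ↔ b' = .zero) :
    SREqS Γ (a.nmul b) (a'.nmul b') n p := by
  by_cases h : a.nmul b = .zero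
  · have h' : a'.nmul b' = .zero := by rwa [nmul_eq_zero, ← ha_zero, ← hb_zero, ← nmul_eq_zero]
    rw [h, h']
    exact .zero n p
  obtain ⟨ha0, hb0⟩ : a ≠ .zero ∧ b ≠ .zero := by simpa using h
  rw [nmul_of_ne_zero ha0 hb0, nmul_of_ne_zero (mt ha_zero.2 ha0) (mt hb_zero.2 hb0)]
  exact ha.mul hb

theorem one_nmul (ha : SRTyp Γ a n m) : SREqS Γ (SRTerm.one.nmul a) a n m := by
  rcases eq_or_ne a .zero with rfl | ha0
  · exact .zero n m
  rw [nmul_of_ne_zero (a := .one) nofun ha0]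
  exact .one_mul ha

theorem nmul_one (ha : SRTyp Γ a n m) : SREqS Γ (a.nmul .one) a n m := by
  rcases eq_or_ne a .zero with rfl | ha0
  · exact .zero n m
  rw [nmul_of_ne_zero (b := .one) ha0 nofun]
  exact .mul_one ha

theorem nmul_assoc (ha : SRTyp Γ a n m) (hb : SRTyp Γ b m p) (hc : SRTyp Γ c p q) :
    SREqS Γ ((a.nmul b).nmul c) (a.nmul (b.nmul c)) n q := by
  rcases eq_or_ne a .zero with rfl | ha0
  · exact .zero n q
  rcases eq_or_ne b .zero with rfl | hb0
  · simpa only [nmul_zero, zero_nmul] using SREqS.zero n q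
  rcases eq_or_ne c .zero with rfl | hc0
  · simpa only [nmul_zero] using SREqS.zero n q
  simpa [nmul_of_ne_zero, ha0, hb0, hc0] using SREqS.mul_assoc ha hb hc

theorem nmul_nadd (ha : SRTyp Γ a n m) (hb : SRTyp Γ b m p) (hc : SRTyp Γ c m p)
    (hnorm : a.norm = a) :
    SREqS Γ (a.nmul (b.nadd c)) ((a.nmul b).nadd (a.nmul c)) n p := by
  rcases eq_or_ne a .zero with rfl | ha0
  · exact .zero n p
  rcases eq_or_ne b .zero with rfl | hb0
  · simpa only [nmul_zero, zero_nadd] using SREqS.refl (ha.nmul hc)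
  rcases eq_or_ne c .zero with rfl | hc0
  · simpa only [nmul_zero, nadd_zero] using SREqS.refl (ha.nmul hb)
  simpa [nmul_of_ne_zero, nadd_of_ne_zero, ha0, hb0, hc0] using
    SREqS.mul_add ha hb hc (hnorm.trans_ne ha0)

theorem nadd_nmul (ha : SRTyp Γ a n m) (hb : SRTyp Γ b p n) (hc : SRTyp Γ c p n)
    (hnorm : a.norm = a) :
    SREqS Γ ((b.nadd c).nmul a) ((b.nmul a).nadd (c.nmul a)) p m := by
  rcases eq_or_ne a .zero with rfl | ha0
  · simpa only [nmul_zero, nadd_zero] using SREqS.zero p m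
  rcases eq_or_ne b .zero with rfl | hb0
  · exact .refl (hc.nmul ha)
  rcases eq_or_ne c .zero with rfl | hc0
  · simpa only [zero_nmul, nadd_zero] using SREqS.refl (hb.nmul ha)
  simpa [nmul_of_ne_zero, nadd_of_ne_zero, ha0, hb0, hc0] using
    SREqS.add_mul ha hb hc (hnorm.trans_ne ha0)

end SREqS

end Judgements

open SRTerm in
theorem semiring_factorisation_general {X T : Type} {Γ : X → T × T} {a b : SRTerm X} {n m : T}
    (h : SREq Γ a b n m) : SREqS Γ a.norm b.norm n m := by
  induction h with
  | var x n m hx => exact .var x n m hx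
  | symm _ ih => exact ih.symm
  | trans _ _ ih₁ ih₂ => exact ih₁.trans ih₂
  | one n => exact .one n
  | zero n m => exact .zero n m
  | mul ha hb iha ihb => exact iha.nmul_congr ihb ha.norm_eq_zero_iff hb.norm_eq_zero_iff
  | add ha hb iha ihb =>
    exact iha.nadd_congr ihb ha.typ.1.norm ha.typ.2.norm hb.typ.1.norm hb.typ.2.norm
  | one_mul ha => exact .one_nmul ha.norm
  | mul_one ha => exact .nmul_one ha.norm
  | mul_assoc ha hb hc => exact .nmul_assoc ha.norm hb.norm hc.norm
  | add_zero ha => simpa only [norm_add, norm_zero, nadd_zero] using SREqS.refl ha.norm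
  | add_comm ha hb => exact .nadd_comm ha.norm hb.norm
  | add_assoc ha hb hc => exact .nadd_assoc ha.norm hb.norm hc.norm
  | mul_add ha hb hc => exact .nmul_nadd ha.norm hb.norm hc.norm (norm_norm _)
  | add_mul ha hb hc => exact .nadd_nmul ha.norm hb.norm hc.norm (norm_norm _)
  | mul_zero _ => simpa only [norm_mul, norm_zero, nmul_zero] using SREqS.zero _ _
  | zero_mul _ => exact .zero _ _

/-- Factorisation for semirings: if the untyped semiring equality `⊢ a = b` is
derivable (i.e. the semiring equality over the singleton set of objects), then the
untyped strict equality `⊢ ⌊a⌋ =⁺ ⌊b⌋` of the normal forms is derivable. -/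
theorem semiring_factorisation {X : Type} (a b : SRTerm X) :
    SREq (fun _ : X => ((), ())) a b () () →
    SREqS (fun _ : X => ((), ())) a.norm b.norm () () :=
  semiring_factorisation_general
end

section
/- Untyping theorem for semirings: for all terms a,b and objects n,m such that a : n→m and b : n→m are derivable in environment Γ, the untyped equality ⊢ a = b is derivable if and only if the typed equality a = b : n→m is derivable in Γ. -/
/-! Distributivity expands every term into a sum of words in the variables, and the list of these
words, up to permutation, is invariant under equality whatever the typing. Conversely, if
`a : n → m` then all words in the expansion of `a` have type `n → m`, so expanding `a` and
reordering its words are typed derivations. The annihilation laws, which can forget the type of the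
discarded factor, cause no trouble because `a · 0` has no words at all. -/

namespace SRTerm

variable {X : Type}

/-- The sum of a list of terms, associated to the right and ending in `+ 0`. -/
def sum : List (SRTerm X) → SRTerm X := List.foldr add zero

/-- The product of a list of terms, associated to the right and ending in `· 1`. -/
def prod : List (SRTerm X) → SRTerm X := List.foldr mul one

/-- The monomial spelled by a word in the variables. -/
def monomial (w : List X) : SRTerm X := prod (w.map var)

/-- The words of the fully expanded form of a term, listed with multiplicity. Up to permutation this
is the polynomial with natural number coefficients, in noncommuting variables, that it denotes. -/
def words : SRTerm X → List (List X)
  | var x => [[x]]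
  | one => [[]]
  | zero => []
  | mul a b => a.words.flatMap fun u => b.words.map (u ++ ·)
  | add a b => a.words ++ b.words

theorem words_mul_eq_map_product (a b : SRTerm X) :
    (mul a b).words = (a.words ×ˢ b.words).map fun q => q.1 ++ q.2 := by
  simp only [words, SProd.sprod, List.product, List.map_flatMap, List.map_map, Function.comp_def]

end SRTerm

section

open SRTerm

variable {ι κ : Type*} {X T : Type} {Γ : X → T × T} {n m p : T}

namespace SRTyp

theorem of_subsingleton [Subsingleton T] (a : SRTerm X) : SRTyp Γ a n m := by
  induction a generalizing n m with
  | var x => exact .var x n m (Subsingleton.elim _ _)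
  | one => exact Subsingleton.elim n m ▸ .one n
  | zero => exact .zero n m
  | mul _ _ iha ihb => exact .mul (m := n) iha ihb
  | add _ _ iha ihb => exact .add iha ihb

theorem sum {l : List (SRTerm X)} (h : ∀ a ∈ l, SRTyp Γ a n m) : SRTyp Γ (sum l) n m := by
  induction l with
  | nil => exact .zero n m
  | cons a l ih =>
    obtain ⟨ha, hl⟩ := List.forall_mem_cons.1 h
    exact .add ha (ih hl)

theorem sum_map {l : List ι} {f : ι → SRTerm X} (h : ∀ i ∈ l, SRTyp Γ (f i) n m) :
    SRTyp Γ (SRTerm.sum (l.map f)) n m :=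
  sum (List.forall_mem_map.2 h)

theorem prod_append {k l : List (SRTerm X)} (hk : SRTyp Γ (prod k) n m)
    (hl : SRTyp Γ (prod l) m p) : SRTyp Γ (prod (k ++ l)) n p := by
  induction k generalizing n with
  | nil => cases hk; exact hl
  | cons a k ih =>
    cases hk with
    | mul ha hk => exact .mul ha (ih hk)

theorem monomial_append {u v : List X} (hu : SRTyp Γ (monomial u) n m)
    (hv : SRTyp Γ (monomial v) m p) : SRTyp Γ (monomial (u ++ v)) n p := by
  simpa only [monomial, List.map_append] using prod_append hu hv

theorem monomial_of_mem_words {a : SRTerm X} (h : SRTyp Γ a n m) :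
    ∀ w ∈ a.words, SRTyp Γ (monomial w) n m := by
  induction h with
  | var x n m hx => exact List.forall_mem_singleton.2 (.mul (.var x n m hx) (.one m))
  | one n => exact List.forall_mem_singleton.2 (.one n)
  | zero => exact List.forall_mem_nil _
  | mul _ _ iha ihb =>
    rw [words_mul_eq_map_product]
    refine List.forall_mem_map.2 fun ⟨u, v⟩ huv => ?_
    obtain ⟨hu, hv⟩ := List.mem_product.1 huv
    exact monomial_append (iha u hu) (ihb v hv)
  | add _ _ iha ihb => exact List.forall_mem_append.2 ⟨iha, ihb⟩

end SRTyp

namespace SREq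

theorem refl_s9 {a : SRTerm X} (h : SRTyp Γ a n m) : SREq Γ a a n m :=
  .trans (.symm (.add_zero h)) (.add_zero h)

theorem zero_add_s9 {a : SRTerm X} (h : SRTyp Γ a n m) : SREq Γ (.add .zero a) a n m :=
  .trans (.add_comm (.zero n m) h) (.add_zero h)

theorem sum_append {k l : List (SRTerm X)} (hk : ∀ a ∈ k, SRTyp Γ a n m)
    (hl : ∀ a ∈ l, SRTyp Γ a n m) :
    SREq Γ (.add (sum k) (sum l)) (sum (k ++ l)) n m := by
  induction k with
  | nil => exact zero_add_s9 (.sum hl)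
  | cons a k ih =>
    obtain ⟨ha, hk⟩ := List.forall_mem_cons.1 hk
    exact .trans (.add_assoc ha (.sum hk) (.sum hl)) (.add (refl_s9 ha) (ih hk))

theorem sum_perm {k l : List (SRTerm X)} (h : k.Perm l) (hk : ∀ a ∈ k, SRTyp Γ a n m) :
    SREq Γ (sum k) (sum l) n m := by
  induction h with
  | nil => exact .zero n m
  | cons a _ ih =>
    obtain ⟨ha, hk⟩ := List.forall_mem_cons.1 hk
    exact .add (refl_s9 ha) (ih hk)
  | swap a b l =>
    obtain ⟨hb, ha, hl⟩ := by simpa only [List.forall_mem_cons] using hk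
    have hs : SRTyp Γ (sum l) n m := .sum hl
    exact .trans (.symm (.add_assoc hb ha hs))
      (.trans (.add (.add_comm hb ha) (refl_s9 hs)) (.add_assoc ha hb hs))
  | trans hkl _ ihkl ihlj => exact .trans (ihkl hk) (ihlj fun a ha => hk a (hkl.mem_iff.2 ha))

theorem sum_map_congr {l : List ι} {f g : ι → SRTerm X} (h : ∀ i ∈ l, SREq Γ (f i) (g i) n m) :
    SREq Γ (sum (l.map f)) (sum (l.map g)) n m := by
  induction l with
  | nil => exact .zero n m
  | cons i l ih =>
    obtain ⟨hi, hl⟩ := List.forall_mem_cons.1 h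
    exact .add hi (ih hl)

theorem mul_sum_map {a : SRTerm X} {l : List ι} {f : ι → SRTerm X} (ha : SRTyp Γ a n m)
    (hf : ∀ i ∈ l, SRTyp Γ (f i) m p) :
    SREq Γ (.mul a (sum (l.map f))) (sum (l.map fun i => .mul a (f i))) n p := by
  induction l with
  | nil => exact .mul_zero ha
  | cons i l ih =>
    obtain ⟨hi, hl⟩ := List.forall_mem_cons.1 hf
    exact .trans (.mul_add ha hi (.sum_map hl)) (.add (refl_s9 (.mul ha hi)) (ih hl))

theorem sum_map_mul_sum_map {k : List ι} {l : List κ} {f : ι → SRTerm X} {g : κ → SRTerm X}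
    (hf : ∀ i ∈ k, SRTyp Γ (f i) n m) (hg : ∀ j ∈ l, SRTyp Γ (g j) m p) :
    SREq Γ (.mul (sum (k.map f)) (sum (l.map g)))
      (sum ((k ×ˢ l).map fun q => .mul (f q.1) (g q.2))) n p := by
  induction k with
  | nil => exact .zero_mul (.sum_map hg)
  | cons i k ih =>
    obtain ⟨hi, hk⟩ := List.forall_mem_cons.1 hf
    have hrow : ∀ j ∈ l, SRTyp Γ (.mul (f i) (g j)) n p := fun j hj => .mul hi (hg j hj)
    have hrows : ∀ q ∈ k ×ˢ l, SRTyp Γ (.mul (f q.1) (g q.2)) n p := fun q hq =>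
      have hq := List.mem_product.1 hq
      .mul (hk q.1 hq.1) (hg q.2 hq.2)
    have collect := sum_append (List.forall_mem_map.2 hrow) (List.forall_mem_map.2 hrows)
    have distrib := SREq.add_mul (.sum_map hg) hi (.sum_map hk)
    rw [List.product_cons, List.map_append, List.map_map]
    exact distrib.trans ((SREq.add (mul_sum_map hi hg) (ih hk)).trans collect)

theorem prod_append {k l : List (SRTerm X)} (hk : SRTyp Γ (prod k) n m)
    (hl : SRTyp Γ (prod l) m p) : SREq Γ (.mul (prod k) (prod l)) (prod (k ++ l)) n p := by
  induction k generalizing n with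
  | nil => cases hk; exact .one_mul hl
  | cons a k ih =>
    cases hk with
    | mul ha hk => exact .trans (.mul_assoc ha hk hl) (.mul (refl_s9 ha) (ih hk))

theorem monomial_append {u v : List X} (hu : SRTyp Γ (monomial u) n m)
    (hv : SRTyp Γ (monomial v) m p) :
    SREq Γ (.mul (monomial u) (monomial v)) (monomial (u ++ v)) n p := by
  simpa only [monomial, List.map_append] using prod_append hu hv

theorem eq_sum_monomial_words {a : SRTerm X} (h : SRTyp Γ a n m) :
    SREq Γ a (sum (a.words.map monomial)) n m := by
  induction h with
  | var x n m hx =>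
    have hx : SRTyp Γ (.var x) n m := .var x n m hx
    exact .symm (.trans (.add_zero (.mul hx (.one m))) (.mul_one hx))
  | one n => exact .symm (.add_zero (.one n))
  | zero n m => exact .zero n m
  | @mul a b n m p ha hb iha ihb =>
    have expand := sum_map_mul_sum_map ha.monomial_of_mem_words hb.monomial_of_mem_words
    have merge : SREq Γ
        (sum ((a.words ×ˢ b.words).map fun q => .mul (monomial q.1) (monomial q.2)))
        (sum ((a.words ×ˢ b.words).map fun q => monomial (q.1 ++ q.2))) n p :=
      sum_map_congr fun q hq =>
        have hq := List.mem_product.1 hq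
        monomial_append (ha.monomial_of_mem_words _ hq.1) (hb.monomial_of_mem_words _ hq.2)
    simpa only [words_mul_eq_map_product, List.map_map, Function.comp_def]
      using (SREq.mul iha ihb).trans (expand.trans merge)
  | @add a b n m ha hb iha ihb =>
    have collect := sum_append (List.forall_mem_map.2 ha.monomial_of_mem_words)
      (List.forall_mem_map.2 hb.monomial_of_mem_words)
    simpa only [words, List.map_append] using (SREq.add iha ihb).trans collect

theorem words_perm {a b : SRTerm X} (h : SREq Γ a b n m) : a.words.Perm b.words := by
  induction h with
  | var | one | zero => exact .refl _
  | symm _ ih => exact ih.symm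
  | trans _ _ ihab ihbc => exact ihab.trans ihbc
  | mul _ _ iha ihb => exact iha.flatMap fun _ _ => ihb.map _
  | add _ _ iha ihb => exact iha.append ihb
  | one_mul => simp [words]
  | mul_one => simp [words]
  | mul_assoc =>
    simp [words, List.flatMap_assoc, List.flatMap_map, List.map_flatMap, Function.comp_def]
  | add_zero => simp [words]
  | add_comm => exact List.perm_append_comm
  | add_assoc => simp [words]
  | mul_add =>
    simp only [words, List.map_append]
    exact (List.flatMap_append_perm _ _ _).symm
  | add_mul => simp [words]
  | mul_zero => simp [words]
  | zero_mul => simp [words]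

theorem iff_words_perm {a b : SRTerm X} (ha : SRTyp Γ a n m) (hb : SRTyp Γ b n m) :
    SREq Γ a b n m ↔ a.words.Perm b.words := by
  refine ⟨words_perm, fun h => ?_⟩
  have reorder : SREq Γ (sum (a.words.map monomial)) (sum (b.words.map monomial)) n m :=
    sum_perm (h.map monomial) (List.forall_mem_map.2 ha.monomial_of_mem_words)
  exact (eq_sum_monomial_words ha).trans (reorder.trans (eq_sum_monomial_words hb).symm)

end SREq

end

theorem semiring_untyping_general {X S T : Type} (Δ : X → S × S) (Γ : X → T × T)
    (a b : SRTerm X) (k l : S) (n m : T) :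
    SRTyp Δ a k l → SRTyp Δ b k l → SRTyp Γ a n m → SRTyp Γ b n m →
    (SREq Δ a b k l ↔ SREq Γ a b n m) :=
  fun haΔ hbΔ haΓ hbΓ => (SREq.iff_words_perm haΔ hbΔ).trans (SREq.iff_words_perm haΓ hbΓ).symm

/-- Untyping theorem for semirings: for all terms `a,b` and objects `n,m` such that
`a : n→m` and `b : n→m` are derivable in environment `Γ`, the untyped equality
`⊢ a = b` (i.e. the equality over the singleton set of objects) is derivable iff
the typed equality `a = b : n→m` is derivable in `Γ`. -/
theorem semiring_untyping {X T : Type} (Γ : X → T × T)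
    (a b : SRTerm X) (n m : T) :
    SRTyp Γ a n m → SRTyp Γ b n m →
    (SREq (fun _ : X => ((), ())) a b () () ↔ SREq Γ a b n m) := by
  exact semiring_untyping_general _ Γ a b () () n m (.of_subsingleton a) (.of_subsingleton b)
end

section
/- In typed Kleene algebras, normalization preserves types and equality: if a : n→m is derivable, then ⌊a⌋ : n→m and a = ⌊a⌋ : n→m are derivable, where ⌊a⌋ is the normal form for the rewriting system a+0 → a, 0+a → a, 0·a → 0, a·0 → 0, 0* → 1. -/
/-- Terms over the signature {·₂, +₂, *₁, 1₀, 0₀}. -/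
inductive KTerm (X : Type) : Type where
  | var : X → KTerm X
  | one : KTerm X
  | zero : KTerm X
  | mul : KTerm X → KTerm X → KTerm X
  | add : KTerm X → KTerm X → KTerm X
  | star : KTerm X → KTerm X

/-- Typing judgement for typed Kleene algebras, in environment `Γ`. -/
inductive KTyp {X T : Type} (Γ : X → T × T) : KTerm X → T → T → Prop where
  | var (x : X) (n m : T) : Γ x = (n, m) → KTyp Γ (.var x) n m
  | one (n : T) : KTyp Γ .one n n
  | zero (n m : T) : KTyp Γ .zero n m
  | mul {a b : KTerm X} {n m p : T} :
      KTyp Γ a n m → KTyp Γ b m p → KTyp Γ (.mul a b) n p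
  | add {a b : KTerm X} {n m : T} :
      KTyp Γ a n m → KTyp Γ b n m → KTyp Γ (.add a b) n m
  | star {a : KTerm X} {n : T} : KTyp Γ a n n → KTyp Γ (.star a) n n

/-- `⌊a⌋`: the normal form of `a` for the convergent rewriting system
`a+0 → a`, `0+a → a`, `0·a → 0`, `a·0 → 0`, `0* → 1`. -/
def KTerm.norm {X : Type} : KTerm X → KTerm X
  | .var x => .var x
  | .one => .one
  | .zero => .zero
  | .mul a b =>
    match a.norm, b.norm with
    | .zero, _ => .zero
    | _, .zero => .zero
    | a', b' => .mul a' b'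
  | .add a b =>
    match a.norm, b.norm with
    | .zero, b' => b'
    | a', .zero => a'
    | a', b' => .add a' b'
  | .star a =>
    match a.norm with
    | .zero => .one
    | a' => .star a'

/-- Typed equality judgement for typed Kleene algebras, in environment `Γ`.
`a ≤ b : n→m` abbreviates `a+b = b : n→m`. -/
inductive KEq {X T : Type} (Γ : X → T × T) : KTerm X → KTerm X → T → T → Prop where
  | var (x : X) (n m : T) : Γ x = (n, m) → KEq Γ (.var x) (.var x) n m
  | symm {a b : KTerm X} {n m : T} : KEq Γ a b n m → KEq Γ b a n m
  | trans {a b c : KTerm X} {n m : T} :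
      KEq Γ a b n m → KEq Γ b c n m → KEq Γ a c n m
  | one (n : T) : KEq Γ .one .one n n
  | zero (n m : T) : KEq Γ .zero .zero n m
  | mul {a a' b b' : KTerm X} {n m p : T} :
      KEq Γ a a' n m → KEq Γ b b' m p → KEq Γ (.mul a b) (.mul a' b') n p
  | add {a a' b b' : KTerm X} {n m : T} :
      KEq Γ a a' n m → KEq Γ b b' n m → KEq Γ (.add a b) (.add a' b') n m
  | star {a b : KTerm X} {n : T} : KEq Γ a b n n → KEq Γ (.star a) (.star b) n n
  | one_mul {a : KTerm X} {n m : T} : KTyp Γ a n m → KEq Γ (.mul .one a) a n m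
  | mul_one {a : KTerm X} {n m : T} : KTyp Γ a n m → KEq Γ (.mul a .one) a n m
  | mul_assoc {a b c : KTerm X} {n m p q : T} :
      KTyp Γ a n m → KTyp Γ b m p → KTyp Γ c p q →
      KEq Γ (.mul (.mul a b) c) (.mul a (.mul b c)) n q
  | add_zero {a : KTerm X} {n m : T} : KTyp Γ a n m → KEq Γ (.add a .zero) a n m
  | add_comm {a b : KTerm X} {n m : T} :
      KTyp Γ a n m → KTyp Γ b n m → KEq Γ (.add a b) (.add b a) n m
  | add_assoc {a b c : KTerm X} {n m : T} :
      KTyp Γ a n m → KTyp Γ b n m → KTyp Γ c n m →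
      KEq Γ (.add (.add a b) c) (.add a (.add b c)) n m
  | mul_add {a b c : KTerm X} {n m p : T} :
      KTyp Γ a n m → KTyp Γ b m p → KTyp Γ c m p →
      KEq Γ (.mul a (.add b c)) (.add (.mul a b) (.mul a c)) n p
  | add_mul {a b c : KTerm X} {n m p : T} :
      KTyp Γ a n m → KTyp Γ b p n → KTyp Γ c p n →
      KEq Γ (.mul (.add b c) a) (.add (.mul b a) (.mul c a)) p m
  | mul_zero {a : KTerm X} {n m p : T} : KTyp Γ a n m → KEq Γ (.mul a .zero) .zero n p
  | zero_mul {a : KTerm X} {n m p : T} : KTyp Γ a n m → KEq Γ (.mul .zero a) .zero p m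
  | add_idem {a : KTerm X} {n m : T} : KTyp Γ a n m → KEq Γ (.add a a) a n m
  | star_unfold {a : KTerm X} {n : T} :
      KTyp Γ a n n → KEq Γ (.add .one (.mul a (.star a))) (.star a) n n
  | star_ind_l {a b : KTerm X} {n m : T} :
      KEq Γ (.add (.mul a b) b) b n m →
      KEq Γ (.add (.mul (.star a) b) b) b n m
  | star_ind_r {a b : KTerm X} {n m : T} :
      KEq Γ (.add (.mul b a) b) b n m →
      KEq Γ (.add (.mul b (.star a)) b) b n m

namespace KTerm

/-- One application, at the root of a term, of a rule of the rewriting system defining `⌊a⌋`.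
Closure under contexts is left out: `KTerm.norm` works bottom-up, so above normalized subterms at
most one root step remains to be done. -/
inductive RootStep {X : Type} : KTerm X → KTerm X → Prop where
  | add_zero (a : KTerm X) : RootStep (.add a .zero) a
  | zero_add (a : KTerm X) : RootStep (.add .zero a) a
  | zero_mul (a : KTerm X) : RootStep (.mul .zero a) .zero
  | mul_zero (a : KTerm X) : RootStep (.mul a .zero) .zero
  | star_zero : RootStep (.star .zero) .one

open Relation

variable {X : Type} (a b : KTerm X)

theorem reflGen_rootStep_norm_mul :
    ReflGen RootStep (.mul a.norm b.norm) (KTerm.mul a b).norm := by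
  rw [norm]
  split
  case h_1 a_norm => rw [a_norm]; exact .single (.zero_mul b.norm)
  case h_2 b_norm _ => rw [b_norm]; exact .single (.mul_zero a.norm)
  case h_3 => exact .refl

theorem reflGen_rootStep_norm_add :
    ReflGen RootStep (.add a.norm b.norm) (KTerm.add a b).norm := by
  rw [norm]
  split
  case h_1 a_norm => rw [a_norm]; exact .single (.zero_add b.norm)
  case h_2 b_norm _ => rw [b_norm]; exact .single (.add_zero a.norm)
  case h_3 => exact .refl

theorem reflGen_rootStep_norm_star :
    ReflGen RootStep (.star a.norm) (KTerm.star a).norm := by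
  rw [norm]
  split
  case h_1 a_norm => rw [a_norm]; exact .single .star_zero
  case h_2 => exact .refl

end KTerm

section

open Relation KTerm

variable {X T : Type} {Γ : X → T × T} {a b : KTerm X} {n m : T}

theorem KEq.refl (h : KTyp Γ a n m) : KEq Γ a a n m := by
  induction h with
  | var x n m hx => exact .var x n m hx
  | one n => exact .one n
  | zero n m => exact .zero n m
  | mul _ _ iha ihb => exact .mul iha ihb
  | add _ _ iha ihb => exact .add iha ihb
  | star _ iha => exact .star iha

theorem KEq.zero_add (h : KTyp Γ a n m) : KEq Γ (.add .zero a) a n m :=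
  (KEq.add_comm (.zero n m) h).trans (.add_zero h)

theorem KEq.star_zero (n : T) : KEq Γ (.star .zero) .one n n :=
  have unfold_star : KEq Γ (.star .zero) (.add .one (.mul .zero (.star .zero))) n n :=
    .symm (.star_unfold (.zero n n))
  have absorb_zero :
      KEq Γ (.add .one (.mul .zero (.star .zero))) (.add .one .zero) n n :=
    .add (.one n) (.zero_mul (.star (.zero n n)))
  unfold_star.trans (absorb_zero.trans (.add_zero (.one n)))

theorem KTyp.of_reflGen_rootStep (ha : KTyp Γ a n m) (hab : ReflGen RootStep a b) :
    KTyp Γ b n m := by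
  rcases hab with _ | step
  · exact ha
  cases step with
  | add_zero => cases ha with | add hb _ => exact hb
  | zero_add => cases ha with | add _ hb => exact hb
  | zero_mul => exact .zero n m
  | mul_zero => exact .zero n m
  | star_zero => cases ha with | star _ => exact .one n

theorem KEq.of_reflGen_rootStep (ha : KTyp Γ a n m) (hab : ReflGen RootStep a b) :
    KEq Γ a b n m := by
  rcases hab with _ | step
  · exact .refl ha
  cases step with
  | add_zero => cases ha with | add hb _ => exact .add_zero hb
  | zero_add => cases ha with | add _ hb => exact .zero_add hb
  | zero_mul => cases ha with | mul _ hc => exact .zero_mul hc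
  | mul_zero => cases ha with | mul hc _ => exact .mul_zero hc
  | star_zero => cases ha with | star _ => exact .star_zero n

theorem KTyp.norm (h : KTyp Γ a n m) : KTyp Γ a.norm n m := by
  induction h with
  | var x n m hx => exact .var x n m hx
  | one n => exact .one n
  | zero n m => exact .zero n m
  | mul _ _ iha ihb => exact (KTyp.mul iha ihb).of_reflGen_rootStep (reflGen_rootStep_norm_mul _ _)
  | add _ _ iha ihb => exact (KTyp.add iha ihb).of_reflGen_rootStep (reflGen_rootStep_norm_add _ _)
  | star _ iha => exact (KTyp.star iha).of_reflGen_rootStep (reflGen_rootStep_norm_star _)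

theorem KTyp.keq_norm (h : KTyp Γ a n m) : KEq Γ a a.norm n m := by
  induction h with
  | var x n m hx => exact .var x n m hx
  | one n => exact .one n
  | zero n m => exact .zero n m
  | mul ha hb iha ihb =>
    exact (KEq.mul iha ihb).trans <|
      .of_reflGen_rootStep (.mul ha.norm hb.norm) (reflGen_rootStep_norm_mul _ _)
  | add ha hb iha ihb =>
    exact (KEq.add iha ihb).trans <|
      .of_reflGen_rootStep (.add ha.norm hb.norm) (reflGen_rootStep_norm_add _ _)
  | star ha iha =>
    exact (KEq.star iha).trans <|
      .of_reflGen_rootStep (.star ha.norm) (reflGen_rootStep_norm_star _)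

end

/-- In typed Kleene algebras, normalization preserves types and equality:
if `a : n→m` is derivable, then `⌊a⌋ : n→m` and `a = ⌊a⌋ : n→m` are derivable. -/
theorem kleene_norm_preserves {X T : Type} (Γ : X → T × T)
    (a : KTerm X) (n m : T) :
    KTyp Γ a n m → KTyp Γ a.norm n m ∧ KEq Γ a a.norm n m :=
  fun h => ⟨h.norm, h.keq_norm⟩
end

section
/- Untyping theorem for strict Kleene algebra equality: if the untyped strict equality ⊢ a =⁺ b is derivable and both a : n→m and b : n→m are derivable in environment Γ, then the typed strict equality a =⁺ b : n→m is derivable in Γ. -/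
/-- Strict typed equality judgement `a =⁺ b : n→m` for typed Kleene algebras: the
Kleene algebra equality judgement without the annihilation rules, with the two
distributivity rules restricted to strict factors, and with the two star induction
rules restricted to strict `b`. `a ≤ b : n→m` abbreviates `a+b = b : n→m`. -/
inductive KEqS {X T : Type} (Γ : X → T × T) : KTerm X → KTerm X → T → T → Prop where
  | var (x : X) (n m : T) : Γ x = (n, m) → KEqS Γ (.var x) (.var x) n m
  | symm {a b : KTerm X} {n m : T} : KEqS Γ a b n m → KEqS Γ b a n m
  | trans {a b c : KTerm X} {n m : T} :
      KEqS Γ a b n m → KEqS Γ b c n m → KEqS Γ a c n m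
  | one (n : T) : KEqS Γ .one .one n n
  | zero (n m : T) : KEqS Γ .zero .zero n m
  | mul {a a' b b' : KTerm X} {n m p : T} :
      KEqS Γ a a' n m → KEqS Γ b b' m p → KEqS Γ (.mul a b) (.mul a' b') n p
  | add {a a' b b' : KTerm X} {n m : T} :
      KEqS Γ a a' n m → KEqS Γ b b' n m → KEqS Γ (.add a b) (.add a' b') n m
  | star {a b : KTerm X} {n : T} : KEqS Γ a b n n → KEqS Γ (.star a) (.star b) n n
  | one_mul {a : KTerm X} {n m : T} : KTyp Γ a n m → KEqS Γ (.mul .one a) a n m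
  | mul_one {a : KTerm X} {n m : T} : KTyp Γ a n m → KEqS Γ (.mul a .one) a n m
  | mul_assoc {a b c : KTerm X} {n m p q : T} :
      KTyp Γ a n m → KTyp Γ b m p → KTyp Γ c p q →
      KEqS Γ (.mul (.mul a b) c) (.mul a (.mul b c)) n q
  | add_zero {a : KTerm X} {n m : T} : KTyp Γ a n m → KEqS Γ (.add a .zero) a n m
  | add_comm {a b : KTerm X} {n m : T} :
      KTyp Γ a n m → KTyp Γ b n m → KEqS Γ (.add a b) (.add b a) n m
  | add_assoc {a b c : KTerm X} {n m : T} :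
      KTyp Γ a n m → KTyp Γ b n m → KTyp Γ c n m →
      KEqS Γ (.add (.add a b) c) (.add a (.add b c)) n m
  | mul_add {a b c : KTerm X} {n m p : T} :
      KTyp Γ a n m → KTyp Γ b m p → KTyp Γ c m p → a.norm ≠ .zero →
      KEqS Γ (.mul a (.add b c)) (.add (.mul a b) (.mul a c)) n p
  | add_mul {a b c : KTerm X} {n m p : T} :
      KTyp Γ a n m → KTyp Γ b p n → KTyp Γ c p n → a.norm ≠ .zero →
      KEqS Γ (.mul (.add b c) a) (.add (.mul b a) (.mul c a)) p m
  | add_idem {a : KTerm X} {n m : T} : KTyp Γ a n m → KEqS Γ (.add a a) a n m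
  | star_unfold {a : KTerm X} {n : T} :
      KTyp Γ a n n → KEqS Γ (.add .one (.mul a (.star a))) (.star a) n n
  | star_ind_l {a b : KTerm X} {n m : T} :
      KEqS Γ (.add (.mul a b) b) b n m → b.norm ≠ .zero →
      KEqS Γ (.add (.mul (.star a) b) b) b n m
  | star_ind_r {a b : KTerm X} {n m : T} :
      KEqS Γ (.add (.mul b a) b) b n m → b.norm ≠ .zero →
      KEqS Γ (.add (.mul b (.star a)) b) b n m

/-!
Since `0` has every type, a rule such as `0·a = 0` relates terms with different typings. In the
strict rules, the term through which an object has to be recovered (the common factor of a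
distributivity rule, the right-hand side of a star induction rule) is strict, and a strict term
determines its source from its target and vice versa. Hence strict equality preserves typings in
both directions. This types the intermediate terms of any derivation, including those introduced
by transitivity, so the derivation can be retyped rule by rule.
-/

namespace KTerm

variable {X : Type} {a b : KTerm X}

theorem norm_mul_eq_zero_iff :
    (KTerm.mul a b).norm = .zero ↔ a.norm = .zero ∨ b.norm = .zero := by
  cases ha : a.norm <;> cases hb : b.norm <;> simp [norm, ha, hb]

theorem norm_add_eq_zero_iff :
    (KTerm.add a b).norm = .zero ↔ a.norm = .zero ∧ b.norm = .zero := by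
  cases ha : a.norm <;> cases hb : b.norm <;> simp [norm, ha, hb]

end KTerm

namespace KTyp

variable {X T : Type} {Γ : X → T × T} {a b c : KTerm X} {n m p n' m' : T}

theorem var_iff {x : X} : KTyp Γ (.var x) n m ↔ Γ x = (n, m) :=
  ⟨fun h => by cases h; assumption, .var x n m⟩

theorem one_iff : KTyp Γ .one n m ↔ n = m :=
  ⟨fun h => by cases h; rfl, fun h => h ▸ .one n⟩

theorem mul_iff : KTyp Γ (.mul a b) n p ↔ ∃ m, KTyp Γ a n m ∧ KTyp Γ b m p :=
  ⟨fun | .mul ha hb => ⟨_, ha, hb⟩, fun ⟨_, ha, hb⟩ => .mul ha hb⟩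

theorem add_iff : KTyp Γ (.add a b) n m ↔ KTyp Γ a n m ∧ KTyp Γ b n m :=
  ⟨fun | .add ha hb => ⟨ha, hb⟩, fun ⟨ha, hb⟩ => .add ha hb⟩

theorem star_iff : KTyp Γ (.star a) n m ↔ n = m ∧ KTyp Γ a n n :=
  ⟨fun h => by cases h with | star ha => exact ⟨rfl, ha⟩, fun ⟨hnm, ha⟩ => hnm ▸ .star ha⟩

theorem source_eq_iff_target_eq (hs : a.norm ≠ .zero)
    (h : KTyp Γ a n m) (h' : KTyp Γ a n' m') : n = n' ↔ m = m' := by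
  induction a generalizing n m n' m' with
  | var x =>
    obtain ⟨rfl, rfl⟩ := Prod.mk.inj ((var_iff.1 h).symm.trans (var_iff.1 h'))
    exact ⟨fun _ => rfl, fun _ => rfl⟩
  | one => rw [one_iff.1 h, one_iff.1 h']
  | zero => exact absurd rfl hs
  | mul a b iha ihb =>
    obtain ⟨ha, hb⟩ := not_or.1 (KTerm.norm_mul_eq_zero_iff.not.1 hs)
    obtain ⟨_, ta, tb⟩ := mul_iff.1 h
    obtain ⟨_, ta', tb'⟩ := mul_iff.1 h'
    exact (iha ha ta ta').trans (ihb hb tb tb')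
  | add a b iha ihb =>
    obtain ⟨ta, tb⟩ := add_iff.1 h
    obtain ⟨ta', tb'⟩ := add_iff.1 h'
    obtain ha | hb := not_and_or.1 (KTerm.norm_add_eq_zero_iff.not.1 hs)
    · exact iha ha ta ta'
    · exact ihb hb tb tb'
  | star a => rw [(star_iff.1 h).1, (star_iff.1 h').1]

theorem target_unique (hs : a.norm ≠ .zero) (h : KTyp Γ a n m) (h' : KTyp Γ a n m') : m = m' :=
  (source_eq_iff_target_eq hs h h').1 rfl

theorem source_unique (hs : a.norm ≠ .zero) (h : KTyp Γ a n m) (h' : KTyp Γ a n' m) : n = n' :=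
  (source_eq_iff_target_eq hs h h').2 rfl

theorem mul_add_iff (hs : a.norm ≠ .zero) :
    KTyp Γ (.mul a (.add b c)) n p ↔ KTyp Γ (.add (.mul a b) (.mul a c)) n p := by
  simp only [mul_iff, add_iff]
  constructor
  · rintro ⟨m, ha, hb, hc⟩
    exact ⟨⟨m, ha, hb⟩, ⟨m, ha, hc⟩⟩
  · rintro ⟨⟨m, ha, hb⟩, ⟨m', ha', hc⟩⟩
    obtain rfl := ha.target_unique hs ha'
    exact ⟨m, ha, hb, hc⟩

theorem add_mul_iff (hs : a.norm ≠ .zero) :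
    KTyp Γ (.mul (.add b c) a) n p ↔ KTyp Γ (.add (.mul b a) (.mul c a)) n p := by
  simp only [mul_iff, add_iff]
  constructor
  · rintro ⟨m, ⟨hb, hc⟩, ha⟩
    exact ⟨⟨m, hb, ha⟩, ⟨m, hc, ha⟩⟩
  · rintro ⟨⟨m, hb, ha⟩, ⟨m', hc, ha'⟩⟩
    obtain rfl := ha.source_unique hs ha'
    exact ⟨m, ⟨hb, hc⟩, ha⟩

theorem mul_left_add_self_iff (hs : b.norm ≠ .zero) :
    KTyp Γ (.add (.mul a b) b) n m ↔ KTyp Γ a n n ∧ KTyp Γ b n m := by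
  simp only [mul_iff, add_iff]
  constructor
  · rintro ⟨⟨k, ha, hb'⟩, hb⟩
    obtain rfl := hb.source_unique hs hb'
    exact ⟨ha, hb⟩
  · rintro ⟨ha, hb⟩
    exact ⟨⟨n, ha, hb⟩, hb⟩

theorem mul_right_add_self_iff (hs : b.norm ≠ .zero) :
    KTyp Γ (.add (.mul b a) b) n m ↔ KTyp Γ b n m ∧ KTyp Γ a m m := by
  simp only [mul_iff, add_iff]
  constructor
  · rintro ⟨⟨k, hb', ha⟩, hb⟩
    obtain rfl := hb.target_unique hs hb'
    exact ⟨hb, ha⟩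
  · rintro ⟨hb, ha⟩
    exact ⟨⟨m, hb, ha⟩, hb⟩

end KTyp

namespace KEqS

variable {X S T : Type} {Δ : X → S × S} {Γ : X → T × T} {a b : KTerm X} {u v : S} {n m : T}

theorem refl (h : KTyp Γ a n m) : KEqS Γ a a n m := by
  induction h with
  | var x n m hx => exact .var x n m hx
  | one n => exact .one n
  | zero n m => exact .zero n m
  | mul _ _ iha ihb => exact .mul iha ihb
  | add _ _ iha ihb => exact .add iha ihb
  | star _ ih => exact .star ih

theorem typ_iff (h : KEqS Δ a b u v) : KTyp Γ a n m ↔ KTyp Γ b n m := by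
  induction h generalizing n m with
  | var | one | zero => rfl
  | symm _ ih => exact ih.symm
  | trans _ _ ih₁ ih₂ => exact ih₁.trans ih₂
  | mul _ _ iha ihb => simp only [KTyp.mul_iff, iha, ihb]
  | add _ _ iha ihb => simp only [KTyp.add_iff, iha, ihb]
  | star _ ih => simp only [KTyp.star_iff, ih]
  | one_mul | mul_one => simp [KTyp.mul_iff, KTyp.one_iff]
  | mul_assoc => simp only [KTyp.mul_iff]; tauto
  | add_zero => simp only [KTyp.add_iff, KTyp.zero, and_true]
  | add_comm => simp only [KTyp.add_iff, and_comm]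
  | add_assoc => simp only [KTyp.add_iff, and_assoc]
  | mul_add _ _ _ hs => exact KTyp.mul_add_iff hs
  | add_mul _ _ _ hs => exact KTyp.add_mul_iff hs
  | add_idem => simp only [KTyp.add_iff, and_self]
  | star_unfold =>
    simp only [KTyp.add_iff, KTyp.one_iff, KTyp.mul_iff, KTyp.star_iff]
    constructor
    · rintro ⟨rfl, _, h, rfl, _⟩
      exact ⟨rfl, h⟩
    · rintro ⟨rfl, h⟩
      exact ⟨rfl, n, h, rfl, h⟩
  | star_ind_l _ hs ih =>
    simp only [KTyp.mul_left_add_self_iff hs] at ih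
    simp only [KTyp.mul_left_add_self_iff hs, KTyp.star_iff, true_and, ih]
  | star_ind_r _ hs ih =>
    simp only [KTyp.mul_right_add_self_iff hs] at ih
    simp only [KTyp.mul_right_add_self_iff hs, KTyp.star_iff, true_and, ih]

end KEqS

theorem kleene_strict_untyping_general {X S T : Type} {Δ : X → S × S} (Γ : X → T × T)
    {a b : KTerm X} {u v : S} {n m : T} (h : KEqS Δ a b u v) (ha : KTyp Γ a n m) :
    KEqS Γ a b n m := by
  induction h generalizing n m with
  | var | one | zero => exact .refl ha
  | symm h ih => exact (ih (h.typ_iff.2 ha)).symm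
  | trans h _ ih₁ ih₂ => exact (ih₁ ha).trans (ih₂ (h.typ_iff.1 ha))
  | mul _ _ ih₁ ih₂ => exact match ha with | .mul h₁ h₂ => (ih₁ h₁).mul (ih₂ h₂)
  | add _ _ ih₁ ih₂ => exact match ha with | .add h₁ h₂ => (ih₁ h₁).add (ih₂ h₂)
  | star _ ih => exact match ha with | .star h => (ih h).star
  | one_mul => exact match ha with | .mul (.one _) h => .one_mul h
  | mul_one => exact match ha with | .mul h (.one _) => .mul_one h
  | mul_assoc => exact match ha with | .mul (.mul h₁ h₂) h₃ => .mul_assoc h₁ h₂ h₃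
  | add_zero => exact match ha with | .add h _ => .add_zero h
  | add_comm => exact match ha with | .add h₁ h₂ => .add_comm h₁ h₂
  | add_assoc => exact match ha with | .add (.add h₁ h₂) h₃ => .add_assoc h₁ h₂ h₃
  | mul_add _ _ _ hs => exact match ha with | .mul h₁ (.add h₂ h₃) => .mul_add h₁ h₂ h₃ hs
  | add_mul _ _ _ hs => exact match ha with | .mul (.add h₂ h₃) h₁ => .add_mul h₁ h₂ h₃ hs
  | add_idem => exact match ha with | .add h _ => .add_idem h
  | star_unfold => exact match ha with | .add (.one _) (.mul _ (.star h)) => .star_unfold h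
  | star_ind_l h hs ih =>
    obtain ⟨_, hb⟩ := KTyp.add_iff.1 ha
    exact .star_ind_l (ih (h.typ_iff.2 hb)) hs
  | star_ind_r h hs ih =>
    obtain ⟨_, hb⟩ := KTyp.add_iff.1 ha
    exact .star_ind_r (ih (h.typ_iff.2 hb)) hs

/-- Untyping theorem for strict Kleene algebra equality: if the untyped strict
equality `⊢ a =⁺ b` is derivable (i.e. the strict equality over the singleton set of
objects) and both `a : n→m` and `b : n→m` are derivable in environment `Γ`, then the
typed strict equality `a =⁺ b : n→m` is derivable in `Γ`. -/
theorem kleene_strict_untyping {X T : Type} (Γ : X → T × T)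
    (a b : KTerm X) (n m : T) :
    KEqS (fun _ : X => ((), ())) a b () () →
    KTyp Γ a n m → KTyp Γ b n m →
    KEqS Γ a b n m :=
  fun h ha _ => kleene_strict_untyping_general Γ h ha
end

section
/- In cyclic MLL, the types of derivable sequents are squares: if the untyped sequent ⊢ l is derivable and the list l has type n→m in environment Γ, then n = m. (More generally, the proof establishes that for every splitting l = h;k and every type n→m of the cyclic permutation k;h, one has n = m.) -/
/-- MLL terms (formulae): variables, dual variables, multiplicative constants,
tensor and par. -/
inductive MLLTerm (X : Type) : Type where
  | var : X → MLLTerm X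
  | covar : X → MLLTerm X
  | one : MLLTerm X
  | bot : MLLTerm X
  | tens : MLLTerm X → MLLTerm X → MLLTerm X
  | parr : MLLTerm X → MLLTerm X → MLLTerm X

/-- Typing judgement for MLL terms, in environment `Γ`. -/
inductive MLLTyp {X T : Type} (Γ : X → T × T) : MLLTerm X → T → T → Prop where
  | var (x : X) (n m : T) : Γ x = (n, m) → MLLTyp Γ (.var x) n m
  | covar (x : X) (n m : T) : Γ x = (n, m) → MLLTyp Γ (.covar x) m n
  | one (n : T) : MLLTyp Γ .one n n
  | bot (n : T) : MLLTyp Γ .bot n n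
  | tens {a b : MLLTerm X} {n m p : T} :
      MLLTyp Γ a n m → MLLTyp Γ b m p → MLLTyp Γ (.tens a b) n p
  | parr {a b : MLLTerm X} {n m p : T} :
      MLLTyp Γ a n m → MLLTyp Γ b m p → MLLTyp Γ (.parr a b) n p

/-- Typing judgement for lists of MLL terms (composition of the types). -/
inductive MLLTypList {X T : Type} (Γ : X → T × T) : List (MLLTerm X) → T → T → Prop where
  | nil (n : T) : MLLTypList Γ [] n n
  | cons {a : MLLTerm X} {l : List (MLLTerm X)} {n m p : T} :
      MLLTyp Γ a n m → MLLTypList Γ l m p → MLLTypList Γ (a :: l) n p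

/-- The untyped one-sided sequent calculus for cyclic MLL: `MLLSeq l` means `⊢ l`. -/
inductive MLLSeq {X : Type} : List (MLLTerm X) → Prop where
  | one : MLLSeq [.one]
  | bot {l : List (MLLTerm X)} : MLLSeq l → MLLSeq (.bot :: l)
  | tens {l k : List (MLLTerm X)} {a b : MLLTerm X} :
      MLLSeq (l ++ [a]) → MLLSeq (b :: k) → MLLSeq (l ++ .tens a b :: k)
  | parr {a b : MLLTerm X} {l : List (MLLTerm X)} :
      MLLSeq (a :: b :: l) → MLLSeq (.parr a b :: l)
  | ax (x : X) : MLLSeq [.covar x, .var x]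
  | ex {a : MLLTerm X} {l : List (MLLTerm X)} : MLLSeq (l ++ [a]) → MLLSeq (a :: l)

/-!
Read a term of type `n → m` as a path from `n` to `m`. Its boundary `m - n`, in the free abelian
group on `T`, is additive under composition, hence can be computed from `Γ` alone, even for an
untypable term. Every rule of the sequent calculus preserves the vanishing of the total boundary,
so a derivable list of type `n → m` satisfies `m - n = 0`, that is, `n = m`. Since addition is
commutative, this survives any reordering of the list.
-/

section Boundary

variable {X T : Type} {Γ : X → T × T}

/-- The boundary of a term in the free abelian group on the types: target minus source, as for the
edges of a directed graph. It is defined for untypable terms too, since sequent derivations may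
contain them. -/
def MLLTerm.boundary (Γ : X → T × T) : MLLTerm X → FreeAbelianGroup T
  | .var x => .of (Γ x).2 - .of (Γ x).1
  | .covar x => .of (Γ x).1 - .of (Γ x).2
  | .one => 0
  | .bot => 0
  | .tens a b => a.boundary Γ + b.boundary Γ
  | .parr a b => a.boundary Γ + b.boundary Γ

theorem MLLTyp.boundary_eq {a : MLLTerm X} {n m : T} (ha : MLLTyp Γ a n m) :
    a.boundary Γ = .of m - .of n := by
  induction ha with
  | var x n m hx => simp only [MLLTerm.boundary, hx]
  | covar x n m hx => simp only [MLLTerm.boundary, hx]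
  | one n => exact (sub_self _).symm
  | bot n => exact (sub_self _).symm
  | tens _ _ iha ihb => rw [MLLTerm.boundary, iha, ihb, sub_add_sub_cancel']
  | parr _ _ iha ihb => rw [MLLTerm.boundary, iha, ihb, sub_add_sub_cancel']

theorem MLLTypList.sum_boundary_eq {l : List (MLLTerm X)} {n m : T} (hl : MLLTypList Γ l n m) :
    (l.map (MLLTerm.boundary Γ)).sum = .of m - .of n := by
  induction hl with
  | nil n => exact (sub_self _).symm
  | cons ha _ ih => rw [List.map_cons, List.sum_cons, ha.boundary_eq, ih, sub_add_sub_cancel']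

theorem MLLSeq.sum_boundary_eq_zero (Γ : X → T × T) {l : List (MLLTerm X)} (hl : MLLSeq l) :
    (l.map (MLLTerm.boundary Γ)).sum = 0 := by
  induction hl with
  | one => simp [MLLTerm.boundary]
  | bot _ ih => simpa [MLLTerm.boundary] using ih
  | @tens l k a b _ _ ihl ihk =>
    calc ((l ++ .tens a b :: k).map (MLLTerm.boundary Γ)).sum
        = ((l ++ [a]).map (MLLTerm.boundary Γ)).sum + ((b :: k).map (MLLTerm.boundary Γ)).sum := by
          simp [MLLTerm.boundary, add_assoc]
      _ = 0 := by rw [ihl, ihk, add_zero]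
  | parr _ ih => simpa [MLLTerm.boundary, add_assoc] using ih
  | ax x => simp [MLLTerm.boundary]
  | ex _ ih => simpa [add_comm] using ih

theorem mll_square_types_general {l l' : List (MLLTerm X)} {n m : T} (hl : MLLSeq l)
    (hperm : l.Perm l') (hl' : MLLTypList Γ l' n m) : n = m := by
  have boundary_eq_zero : FreeAbelianGroup.of m - FreeAbelianGroup.of n = 0 := by
    rw [← hl'.sum_boundary_eq, ← (hperm.map _).sum_eq, hl.sum_boundary_eq_zero Γ]
  exact (FreeAbelianGroup.of_injective (sub_eq_zero.mp boundary_eq_zero)).symm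

end Boundary

/-- In cyclic MLL, the types of derivable sequents are squares: if the untyped
sequent `⊢ l` is derivable and `l` has type `n→m` in environment `Γ`, then `n = m`;
and more generally, for every splitting `l = h;k` and every type `n→m` of the cyclic
permutation `k;h`, one has `n = m`. -/
theorem mll_square_types {X T : Type} (Γ : X → T × T) :
    (∀ (l : List (MLLTerm X)) (n m : T), MLLSeq l → MLLTypList Γ l n m → n = m) ∧
    (∀ (h k : List (MLLTerm X)) (n m : T),
      MLLSeq (h ++ k) → MLLTypList Γ (k ++ h) n m → n = m) :=
  ⟨fun _ _ _ hl ht => mll_square_types_general hl (.refl _) ht,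
    fun _ _ _ _ hl ht => mll_square_types_general hl List.perm_append_comm ht⟩
end
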